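/- Let N ≥ 1, 0 < q < 1, 0 < γ < min{2, N}, and let u₀ : ℝ^N → ℝ be a non-negative continuous function vanishing at infinity with u₀ not identically zero. Set η₀ = (4π)^{−N/2} ∫_{ℝ^N} exp(−|z|²/4) (1+|z|)^{−γ/(1−q)} dz. If u : ℝ^N × [0,∞) → ℝ is a non-negative function such that x ↦ u(x,t) is continuous and vanishes at infinity for every t ≥ 0, t ↦ u(·,t) is continuous into the bounded continuous functions with the sup norm, and u satisfies u(x,t) = ∫_{ℝ^N} G_t(x−y) u₀(y) dy + ∫₀ᵗ ∫_{ℝ^N} G_{t−σ}(x−y) |y|^{−γ} u(y,σ)^q dy dσ for all t ≥ 0 and x ∈ ℝ^N, then u(x,t) ≥ [(1−q) η₀]^{1/(1−q)} t^{1/(1−q)} (|x| + √t)^{−γ/(1−q)} for all x ∈ ℝ^N and t ≥ 0; in particular u(x,t) > 0 for all x ∈ ℝ^N and t > 0. -/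

import Mathlib

open MeasureTheory Filter Real

/-- The heat kernel `G_t(x) = (4πt)^{-N/2} exp(-|x|²/(4t))` on `ℝ^N`. -/
noncomputable def heatKernel (N : ℕ) (t : ℝ) (x : EuclideanSpace ℝ (Fin N)) : ℝ :=
  (4 * π * t) ^ (-(N : ℝ) / 2) * Real.exp (-‖x‖ ^ 2 / (4 * t))

theorem heatKernel_nonneg (N : ℕ) {t : ℝ} (ht : 0 ≤ t) (x : EuclideanSpace ℝ (Fin N)) :
    0 ≤ heatKernel N t x := by
  unfold heatKernel; positivity

theorem measurable_heatKernel (N : ℕ) :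
    Measurable (fun p : ℝ × EuclideanSpace ℝ (Fin N) => heatKernel N p.1 p.2) := by
  unfold heatKernel
  fun_prop

theorem sqrt_pow_mul_rpow (N : ℕ) {t : ℝ} (ht : 0 < t) :
    √t ^ N * t ^ (-(N : ℝ) / 2) = 1 := by
  rw [← rpow_natCast, sqrt_eq_rpow, ← rpow_mul ht.le, ← rpow_add ht]
  ring_nf
  simp

theorem heatKernel_sqrt_smul (N : ℕ) {t : ℝ} (ht : 0 < t) (z : EuclideanSpace ℝ (Fin N)) :
    √t ^ N * heatKernel N t (√t • z) = (4 * π) ^ (-(N : ℝ) / 2) * exp (-‖z‖ ^ 2 / 4) := by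
  unfold heatKernel
  have hexp : -‖√t • z‖ ^ 2 / (4 * t) = -‖z‖ ^ 2 / 4 := by
    rw [norm_smul, norm_of_nonneg (sqrt_nonneg t), mul_pow, sq_sqrt ht.le]
    field_simp
  have hpow := sqrt_pow_mul_rpow N ht
  rw [hexp, mul_rpow (by positivity) ht.le]
  linear_combination (4 * π) ^ (-(N : ℝ) / 2) * exp (-‖z‖ ^ 2 / 4) * hpow

/-- Parabolic rescaling of a convolution with the heat kernel. -/
theorem integral_heatKernel_mul (N : ℕ) {t : ℝ} (ht : 0 < t) (x : EuclideanSpace ℝ (Fin N))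
    (g : EuclideanSpace ℝ (Fin N) → ℝ) :
    ∫ y, heatKernel N t (x - y) * g ((√t)⁻¹ • (x - y)) =
      (4 * π) ^ (-(N : ℝ) / 2) * ∫ z, exp (-‖z‖ ^ 2 / 4) * g z := by
  have hs : 0 < √t := sqrt_pos.2 ht
  rw [integral_sub_left_eq_self (fun y => heatKernel N t y * g ((√t)⁻¹ • y)) volume x,
    ← integral_const_mul]
  have h := Measure.integral_comp_smul volume
    (fun y : EuclideanSpace ℝ (Fin N) => heatKernel N t y * g ((√t)⁻¹ • y)) (√t)
  rw [finrank_euclideanSpace_fin, abs_of_pos (by positivity), smul_eq_mul,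
    eq_inv_mul_iff_mul_eq₀ (by positivity), ← integral_const_mul] at h
  rw [← h]
  refine integral_congr_ae (Eventually.of_forall fun z => ?_)
  simp only [smul_smul, inv_mul_cancel₀ hs.ne', one_smul]
  rw [← mul_assoc, heatKernel_sqrt_smul N ht, mul_assoc]

theorem integrable_exp_neg_sq (N : ℕ) :
    Integrable (fun z : EuclideanSpace ℝ (Fin N) => exp (-‖z‖ ^ 2 / 4)) := by
  have h := (GaussianFourier.integrable_cexp_neg_mul_sq_norm_add (b := (1 / 4 : ℂ))
    (by norm_num) 0 (0 : EuclideanSpace ℝ (Fin N))).norm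
  refine h.congr (Eventually.of_forall fun z => ?_)
  simp only [Complex.norm_exp]
  congr 1
  simp [← Complex.ofReal_pow]
  norm_num
  ring

theorem integrable_heatKernel (N : ℕ) {t : ℝ} (ht : 0 < t) (x : EuclideanSpace ℝ (Fin N)) :
    Integrable (fun y => heatKernel N t (x - y)) := by
  refine Integrable.comp_sub_left (f := heatKernel N t) ?_ x
  have hs : 0 < √t := sqrt_pos.2 ht
  rw [← integrable_comp_smul_iff volume _ hs.ne']
  refine (((integrable_exp_neg_sq N).const_mul ((4 * π) ^ (-(N : ℝ) / 2))).const_mul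
    (√t ^ N)⁻¹).congr (Eventually.of_forall fun z => ?_)
  simp only [← heatKernel_sqrt_smul N ht]
  field_simp

theorem integral_heatKernel (N : ℕ) {t : ℝ} (ht : 0 < t) (x : EuclideanSpace ℝ (Fin N)) :
    ∫ y, heatKernel N t (x - y) = 1 := by
  have h := integral_heatKernel_mul N ht x (fun _ => 1)
  simp only [mul_one] at h
  have h2 := GaussianFourier.integral_rexp_neg_mul_sq_norm (V := EuclideanSpace ℝ (Fin N))
    (b := 1 / 4) (by norm_num)
  have h3 : ∀ z : EuclideanSpace ℝ (Fin N), -‖z‖ ^ 2 / 4 = -(1 / 4) * ‖z‖ ^ 2 := fun z => by ring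
  simp only [h, h3, h2, finrank_euclideanSpace_fin]
  rw [show π / (1 / 4) = 4 * π by ring, ← rpow_add (by positivity)]
  ring_nf
  simp

theorem integrableOn_norm_rpow_ball (N : ℕ) (hN : 1 ≤ N) {γ : ℝ} (hγ : γ < N) :
    IntegrableOn (fun y : EuclideanSpace ℝ (Fin N) => ‖y‖ ^ (-γ)) (Metric.ball 0 1) := by
  have : Nonempty (Fin N) := ⟨⟨0, hN⟩⟩
  have : Nontrivial (EuclideanSpace ℝ (Fin N)) := inferInstance
  rw [integrableOn_fun_norm_addHaar volume (f := fun y : ℝ => y ^ (-γ)), finrank_euclideanSpace_fin,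
    integrableOn_congr_fun (g := fun y : ℝ => y ^ ((N : ℝ) - 1 - γ)) _ measurableSet_Ioo,
    ← intervalIntegrable_iff_integrableOn_Ioo_of_le zero_le_one]
  · exact intervalIntegral.intervalIntegrable_rpow' (by linarith)
  · intro y hy
    simp only [smul_eq_mul]
    rw [← rpow_natCast, ← rpow_add hy.1, Nat.cast_sub hN]
    simp [sub_eq_add_neg]

/-- The profile `‖y‖ ^ (-γ)` cut off to the unit ball. -/
noncomputable def singularProfile (N : ℕ) (γ : ℝ) : EuclideanSpace ℝ (Fin N) → ℝ :=
  (Metric.ball 0 1).indicator fun y => ‖y‖ ^ (-γ)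

theorem singularProfile_nonneg (N : ℕ) (γ : ℝ) (y : EuclideanSpace ℝ (Fin N)) :
    0 ≤ singularProfile N γ y :=
  Set.indicator_nonneg (fun _ _ => by positivity) y

theorem integrable_singularProfile (N : ℕ) (hN : 1 ≤ N) {γ : ℝ} (hγ : γ < N) :
    Integrable (singularProfile N γ) :=
  (integrable_indicator_iff measurableSet_ball).2 (integrableOn_norm_rpow_ball N hN hγ)

theorem heatKernel_mul_norm_rpow_le (N : ℕ) {γ t : ℝ} (hγ : 0 < γ) (ht : 0 < t)
    (x y : EuclideanSpace ℝ (Fin N)) :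
    heatKernel N t (x - y) * ‖y‖ ^ (-γ) ≤
      (4 * π * t) ^ (-(N : ℝ) / 2) * t ^ (-γ / 2) * singularProfile N γ ((√t)⁻¹ • y) +
        t ^ (-γ / 2) * heatKernel N t (x - y) := by
  have hs : 0 < √t := sqrt_pos.2 ht
  have hG := heatKernel_nonneg N ht.le (x - y)
  have htpow : t ^ (-γ / 2) = √t ^ (-γ) := by
    rw [sqrt_eq_rpow, ← rpow_mul ht.le]; ring_nf
  have hnorm : ‖(√t)⁻¹ • y‖ = (√t)⁻¹ * ‖y‖ := by
    rw [norm_smul, norm_of_nonneg (by positivity)]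
  by_cases hy : ‖y‖ < √t
  · have hmem : (√t)⁻¹ • y ∈ Metric.ball (0 : EuclideanSpace ℝ (Fin N)) 1 := by
      rw [mem_ball_zero_iff, hnorm, inv_mul_lt_iff₀ hs]
      simpa using hy
    have hprof : t ^ (-γ / 2) * singularProfile N γ ((√t)⁻¹ • y) = ‖y‖ ^ (-γ) := by
      rw [singularProfile, Set.indicator_of_mem hmem, htpow, hnorm,
        ← mul_rpow hs.le (by positivity), mul_inv_cancel_left₀ hs.ne']
    rw [mul_assoc, hprof]
    have hle : heatKernel N t (x - y) ≤ (4 * π * t) ^ (-(N : ℝ) / 2) := by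
      unfold heatKernel
      refine mul_le_of_le_one_right (by positivity) (exp_le_one_iff.2 ?_)
      rw [neg_div]
      exact neg_nonpos.2 (by positivity)
    have h2 : 0 ≤ t ^ (-γ / 2) * heatKernel N t (x - y) := by positivity
    have h3 := mul_le_mul_of_nonneg_right hle (show 0 ≤ ‖y‖ ^ (-γ) by positivity)
    linarith
  · have h1 : ‖y‖ ^ (-γ) ≤ t ^ (-γ / 2) := by
      rw [htpow]
      exact rpow_le_rpow_of_nonpos hs (not_lt.1 hy) (by linarith)
    have h2 := singularProfile_nonneg N γ ((√t)⁻¹ • y)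
    have h3 := mul_le_mul_of_nonneg_left h1 hG
    have h4 : 0 ≤ (4 * π * t) ^ (-(N : ℝ) / 2) * t ^ (-γ / 2) *
      singularProfile N γ ((√t)⁻¹ • y) := by positivity
    linarith

theorem integrable_heatKernel_mul_norm_rpow (N : ℕ) (hN : 1 ≤ N) {γ t : ℝ} (hγ : 0 < γ)
    (hγN : γ < N) (ht : 0 < t) (x : EuclideanSpace ℝ (Fin N)) :
    Integrable (fun y => heatKernel N t (x - y) * ‖y‖ ^ (-γ)) := by
  have hs : 0 < √t := sqrt_pos.2 ht
  refine Integrable.mono' ((((integrable_singularProfile N hN hγN).comp_smul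
    (inv_ne_zero hs.ne')).const_mul ((4 * π * t) ^ (-(N : ℝ) / 2) * t ^ (-γ / 2))).add
    ((integrable_heatKernel N ht x).const_mul (t ^ (-γ / 2)))) ?_
    (Eventually.of_forall fun y => ?_)
  · exact ((integrable_heatKernel N ht x).aestronglyMeasurable.mul
      (by fun_prop : Measurable fun y : EuclideanSpace ℝ (Fin N) =>
        ‖y‖ ^ (-γ)).aestronglyMeasurable)
  · have := heatKernel_nonneg N ht.le (x - y)
    rw [norm_of_nonneg (by positivity)]
    exact heatKernel_mul_norm_rpow_le N hγ ht x y

theorem integral_heatKernel_mul_norm_rpow_le (N : ℕ) (hN : 1 ≤ N) {γ t : ℝ} (hγ : 0 < γ)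
    (hγN : γ < N) (ht : 0 < t) (x : EuclideanSpace ℝ (Fin N)) :
    ∫ y, heatKernel N t (x - y) * ‖y‖ ^ (-γ) ≤
      ((4 * π) ^ (-(N : ℝ) / 2) * (∫ y, singularProfile N γ y) + 1) * t ^ (-γ / 2) := by
  have hs : 0 < √t := sqrt_pos.2 ht
  have hi₁ := ((integrable_singularProfile N hN hγN).comp_smul
    (inv_ne_zero hs.ne')).const_mul ((4 * π * t) ^ (-(N : ℝ) / 2) * t ^ (-γ / 2))
  have hi₂ := (integrable_heatKernel N ht x).const_mul (t ^ (-γ / 2))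
  refine (integral_mono (integrable_heatKernel_mul_norm_rpow N hN hγ hγN ht x) (hi₁.add hi₂)
    (fun y => heatKernel_mul_norm_rpow_le N hγ ht x y)).trans (le_of_eq ?_)
  have hpow := sqrt_pow_mul_rpow N ht
  rw [integral_add' hi₁ hi₂, integral_const_mul, integral_const_mul, integral_heatKernel N ht,
    Measure.integral_comp_inv_smul, finrank_euclideanSpace_fin, abs_of_pos (by positivity),
    smul_eq_mul, mul_rpow (by positivity) ht.le]
  linear_combination (4 * π) ^ (-(N : ℝ) / 2) * t ^ (-γ / 2) *
    (∫ y, singularProfile N γ y) * hpow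

theorem integrable_heatKernel_mul_norm_rpow_mul (N : ℕ) (hN : 1 ≤ N) {γ t K : ℝ} (hγ : 0 < γ)
    (hγN : γ < N) (ht : 0 < t) (x : EuclideanSpace ℝ (Fin N))
    {f : EuclideanSpace ℝ (Fin N) → ℝ} (hf : Measurable f) (hf0 : ∀ y, 0 ≤ f y)
    (hfK : ∀ y, f y ≤ K) :
    Integrable (fun y => heatKernel N t (x - y) * ‖y‖ ^ (-γ) * f y) :=
  (integrable_heatKernel_mul_norm_rpow N hN hγ hγN ht x).mul_bdd (c := K) hf.aestronglyMeasurable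
    (Eventually.of_forall fun y => by rw [norm_of_nonneg (hf0 y)]; exact hfK y)

theorem integral_heatKernel_mul_norm_rpow_mul_le (N : ℕ) (hN : 1 ≤ N) {γ t K : ℝ} (hγ : 0 < γ)
    (hγN : γ < N) (ht : 0 < t) (x : EuclideanSpace ℝ (Fin N))
    {f : EuclideanSpace ℝ (Fin N) → ℝ} (hf : Measurable f) (hf0 : ∀ y, 0 ≤ f y)
    (hfK : ∀ y, f y ≤ K) :
    ∫ y, heatKernel N t (x - y) * ‖y‖ ^ (-γ) * f y ≤
      ((4 * π) ^ (-(N : ℝ) / 2) * (∫ y, singularProfile N γ y) + 1) * K * t ^ (-γ / 2) := by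
  have hK : 0 ≤ K := (hf0 0).trans (hfK 0)
  have hi := integrable_heatKernel_mul_norm_rpow N hN hγ hγN ht x
  calc ∫ y, heatKernel N t (x - y) * ‖y‖ ^ (-γ) * f y
      ≤ ∫ y, heatKernel N t (x - y) * ‖y‖ ^ (-γ) * K := by
        refine integral_mono
          (integrable_heatKernel_mul_norm_rpow_mul N hN hγ hγN ht x hf hf0 hfK)
          (hi.mul_const K) fun y => ?_
        have := heatKernel_nonneg N ht.le (x - y)
        exact mul_le_mul_of_nonneg_left (hfK y) (by positivity)
    _ ≤ _ := by
        rw [integral_mul_const, mul_right_comm]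
        exact mul_le_mul_of_nonneg_right
          (integral_heatKernel_mul_norm_rpow_le N hN hγ hγN ht x) hK

theorem intervalIntegrable_duhamel (N : ℕ) (hN : 1 ≤ N) {γ t K : ℝ} (hγ : 0 < γ)
    (hγN : γ < N) (hγ2 : γ < 2) (ht : 0 ≤ t) (x : EuclideanSpace ℝ (Fin N))
    {f : ℝ → EuclideanSpace ℝ (Fin N) → ℝ} (hf : Measurable (Function.uncurry f))
    (hf0 : ∀ s y, 0 ≤ f s y) (hfK : ∀ s ∈ Set.Ioo 0 t, ∀ y, f s y ≤ K) :
    IntervalIntegrable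
      (fun σ => ∫ y, heatKernel N (t - σ) (x - y) * ‖y‖ ^ (-γ) * f σ y) volume 0 t := by
  have hG := measurable_heatKernel N
  have hmeas : StronglyMeasurable
      fun σ => ∫ y, heatKernel N (t - σ) (x - y) * ‖y‖ ^ (-γ) * f σ y := by
    refine StronglyMeasurable.integral_prod_right
      (f := fun σ y => heatKernel N (t - σ) (x - y) * ‖y‖ ^ (-γ) * f σ y)
      (Measurable.stronglyMeasurable ?_)
    refine Measurable.mul (Measurable.mul ?_ (by fun_prop)) hf
    exact hG.comp (f := fun p : ℝ × EuclideanSpace ℝ (Fin N) => (t - p.1, x - p.2)) (by fun_prop)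
  have hdom : IntervalIntegrable (fun σ => ((4 * π) ^ (-(N : ℝ) / 2) *
      (∫ y, singularProfile N γ y) + 1) * K * (t - σ) ^ (-γ / 2)) volume 0 t := by
    refine IntervalIntegrable.const_mul ?_ _
    have h := (intervalIntegral.intervalIntegrable_rpow' (a := t) (b := 0) (r := -γ / 2)
      (by linarith)).comp_sub_left t
    simpa using h
  rw [intervalIntegrable_iff_integrableOn_Ioo_of_le ht] at hdom ⊢
  refine Integrable.mono' hdom hmeas.aestronglyMeasurable
    ((ae_restrict_iff' measurableSet_Ioo).2 (Eventually.of_forall fun σ hσ => ?_))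
  have hσt : 0 < t - σ := sub_pos.2 hσ.2
  rw [norm_of_nonneg (integral_nonneg fun y => ?_)]
  · exact integral_heatKernel_mul_norm_rpow_mul_le N hN hγ hγN hσt x
      (hf.comp measurable_prodMk_left) (hf0 σ) (hfK σ hσ)
  · have := heatKernel_nonneg N hσt.le (x - y)
    have := hf0 σ y
    simp only [Pi.zero_apply]
    positivity

/-- A continuous curve of functions in `C₀` is uniformly bounded on compact time intervals. -/
theorem exists_bound_of_continuous_sup (N : ℕ) (u : EuclideanSpace ℝ (Fin N) → ℝ → ℝ)
    (huc : ∀ t, 0 ≤ t → Continuous (fun x => u x t))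
    (huv : ∀ t, 0 ≤ t → Tendsto (fun x => u x t)
      (cocompact (EuclideanSpace ℝ (Fin N))) (nhds 0))
    (husup : ∀ t₀, 0 ≤ t₀ → ∀ ε > (0 : ℝ), ∃ δ > (0 : ℝ), ∀ t, 0 ≤ t →
      |t - t₀| < δ → ∀ x, |u x t - u x t₀| ≤ ε) (T : ℝ) :
    ∃ M, ∀ t ∈ Set.Icc 0 T, ∀ x, u x t ≤ M := by
  refine isCompact_Icc.induction_on (p := fun s => ∃ M, ∀ t ∈ s, ∀ x, u x t ≤ M)
    ⟨0, by simp⟩ ?_ ?_ ?_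
  · rintro s t hst ⟨M, hM⟩
    exact ⟨M, fun r hr => hM r (hst hr)⟩
  · rintro s t ⟨M, hM⟩ ⟨M', hM'⟩
    refine ⟨max M M', ?_⟩
    rintro r (hr | hr) x
    · exact (hM r hr x).trans (le_max_left _ _)
    · exact (hM' r hr x).trans (le_max_right _ _)
  · intro t₀ ht₀
    obtain ⟨C, hC⟩ := (ZeroAtInftyContinuousMap.isBounded_range
      ⟨⟨fun x => u x t₀, huc t₀ ht₀.1⟩, huv t₀ ht₀.1⟩).exists_norm_le
    obtain ⟨δ, hδ, h⟩ := husup t₀ ht₀.1 1 one_pos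
    refine ⟨Set.Icc 0 T ∩ Metric.ball t₀ δ,
      inter_mem_nhdsWithin _ (Metric.ball_mem_nhds t₀ hδ), C + 1, ?_⟩
    rintro t ⟨ht', ht⟩ x
    have h1 := (abs_le.1 (h t ht'.1 ht x)).2
    have h2 := (abs_le.1 (hC (u x t₀) ⟨x, rfl⟩)).2
    linarith

theorem continuous_uncurry_of_continuous_sup (N : ℕ) (u : EuclideanSpace ℝ (Fin N) → ℝ → ℝ)
    (huc : ∀ t, 0 ≤ t → Continuous (fun x => u x t))
    (husup : ∀ t₀, 0 ≤ t₀ → ∀ ε > (0 : ℝ), ∃ δ > (0 : ℝ), ∀ t, 0 ≤ t →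
      |t - t₀| < δ → ∀ x, |u x t - u x t₀| ≤ ε) :
    Continuous (fun p : ℝ × EuclideanSpace ℝ (Fin N) => u p.2 (max p.1 0)) := by
  rw [continuous_iff_continuousAt]
  rintro ⟨t₀, x₀⟩
  rw [Metric.continuousAt_iff']
  intro ε hε
  obtain ⟨δ, hδ, h⟩ := husup (max t₀ 0) (le_max_right _ _) (ε / 2) (half_pos hε)
  have h1 : ∀ᶠ p : ℝ × EuclideanSpace ℝ (Fin N) in nhds (t₀, x₀),
      |max p.1 0 - max t₀ 0| < δ := by
    have hc : Continuous fun p : ℝ × EuclideanSpace ℝ (Fin N) => max p.1 0 := by fun_prop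
    exact Metric.continuousAt_iff'.1 hc.continuousAt δ hδ
  have h2 : ∀ᶠ p : ℝ × EuclideanSpace ℝ (Fin N) in nhds (t₀, x₀),
      |u p.2 (max t₀ 0) - u x₀ (max t₀ 0)| < ε / 2 := by
    have hc : Continuous fun p : ℝ × EuclideanSpace ℝ (Fin N) => u p.2 (max t₀ 0) :=
      (huc _ (le_max_right _ _)).comp continuous_snd
    exact Metric.continuousAt_iff'.1 hc.continuousAt (ε / 2) (half_pos hε)
  filter_upwards [h1, h2] with p hp1 hp2
  have hp := h (max p.1 0) (le_max_right _ _) hp1 p.2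
  rw [dist_eq]
  have := abs_sub_le (u p.2 (max p.1 0)) (u p.2 (max t₀ 0)) (u x₀ (max t₀ 0))
  linarith

/-- Gaussian average of `(1 + ‖z‖) ^ (-α) * exp (-κ ‖z‖²)`; the constant `η₀` is the case
`κ = 0`. -/
noncomputable def gaussianAverage (N : ℕ) (α κ : ℝ) : ℝ :=
  (4 * π) ^ (-(N : ℝ) / 2) * ∫ z : EuclideanSpace ℝ (Fin N),
    exp (-‖z‖ ^ 2 / 4) * ((1 + ‖z‖) ^ (-α) * exp (-(κ * ‖z‖ ^ 2)))

theorem integrable_gaussianAverage (N : ℕ) {α κ : ℝ} (hα : 0 ≤ α) (hκ : 0 ≤ κ) :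
    Integrable (fun z : EuclideanSpace ℝ (Fin N) =>
      exp (-‖z‖ ^ 2 / 4) * ((1 + ‖z‖) ^ (-α) * exp (-(κ * ‖z‖ ^ 2)))) := by
  refine (integrable_exp_neg_sq N).mul_bdd (c := 1) (Measurable.aestronglyMeasurable (by fun_prop))
    (Eventually.of_forall fun z => ?_)
  rw [norm_of_nonneg (by positivity)]
  refine mul_le_one₀ (rpow_le_one_of_one_le_of_nonpos ?_ (by linarith)) (by positivity)
    (exp_le_one_iff.2 (neg_nonpos.2 (by positivity)))
  linarith [norm_nonneg z]

theorem gaussianAverage_pos (N : ℕ) {α κ : ℝ} (hα : 0 ≤ α) (hκ : 0 ≤ κ) :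
    0 < gaussianAverage N α κ := by
  refine mul_pos (by positivity) ((integral_pos_iff_support_of_nonneg (fun z => ?_)
    (integrable_gaussianAverage N hα hκ)).2 ?_)
  · simp only [Pi.zero_apply]
    positivity
  · rw [Set.eq_univ_of_forall fun z => Function.mem_support.2 ?_]
    · exact isOpen_univ.measure_pos volume Set.univ_nonempty
    · positivity

theorem gaussianAverage_antitone (N : ℕ) {α κ κ' : ℝ} (hα : 0 ≤ α) (hκ : 0 ≤ κ) (h : κ ≤ κ') :
    gaussianAverage N α κ' ≤ gaussianAverage N α κ := by
  refine mul_le_mul_of_nonneg_left (integral_mono (integrable_gaussianAverage N hα (hκ.trans h))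
    (integrable_gaussianAverage N hα hκ) fun z => ?_) (by positivity)
  dsimp only
  gcongr

theorem source_pointwise_lower_bound {q γ α a b A D lam T t σ X Y Z U : ℝ} (hq0 : 0 < q)
    (hq1 : q < 1) (hγ : 0 < γ) (hb : 0 ≤ b) (hbα : b * q + γ ≤ α) (hA : 0 < A) (hD : 0 < D)
    (hlam : 0 ≤ lam) (hσ : 0 < σ) (hσt : σ < t) (htT : t ≤ T) (hX : 0 ≤ X) (hY : 0 < Y)
    (hZ : 0 ≤ Z) (hYX : Y ≤ X + √(t - σ) * Z)
    (hU : A * D ^ a * (Y + √σ) ^ (-b) * exp (-(lam * Y ^ 2)) ≤ U) :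
    A ^ q * D ^ (a * q) * (X + √t) ^ (-(b * q + γ)) * exp (-(√q * lam * X ^ 2)) *
      ((1 + Z) ^ (-α) * exp (-(lam * (q / (1 - √q) * T) * Z ^ 2))) ≤ Y ^ (-γ) * U ^ q := by
  have ht : 0 < t := hσ.trans hσt
  have hst : 0 < √t := sqrt_pos.2 ht
  have hsσ : 0 < √σ := sqrt_pos.2 hσ
  have hr0 : 0 < √q := sqrt_pos.2 hq0
  have hr1 : √q < 1 := by rw [sqrt_lt' one_pos]; simpa using hq1
  have hUq : A ^ q * D ^ (a * q) * (Y + √σ) ^ (-(b * q)) * exp (-(lam * q * Y ^ 2)) ≤ U ^ q := by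
    refine le_trans (le_of_eq ?_) (rpow_le_rpow (by positivity) hU hq0.le)
    rw [mul_rpow (by positivity) (by positivity), mul_rpow (by positivity) (by positivity),
      mul_rpow (by positivity) (by positivity), ← rpow_mul hD.le, ← rpow_mul (by positivity),
      ← exp_mul]
    ring_nf
  have hYγ : (Y + √σ) ^ (-γ) ≤ Y ^ (-γ) :=
    rpow_le_rpow_of_nonpos hY (by linarith) (by linarith)
  have hbase : Y + √σ ≤ (X + √t) * (1 + Z) := by
    have h1 : √(t - σ) ≤ √t := sqrt_le_sqrt (by linarith)
    have h2 : √σ ≤ √t := sqrt_le_sqrt hσt.le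
    have h3 := mul_le_mul_of_nonneg_right h1 hZ
    nlinarith [mul_nonneg hX hZ]
  have hpow : (X + √t) ^ (-(b * q + γ)) * (1 + Z) ^ (-α) ≤ (Y + √σ) ^ (-(b * q + γ)) := by
    calc (X + √t) ^ (-(b * q + γ)) * (1 + Z) ^ (-α)
        ≤ (X + √t) ^ (-(b * q + γ)) * (1 + Z) ^ (-(b * q + γ)) := by
          refine mul_le_mul_of_nonneg_left ?_ (by positivity)
          exact rpow_le_rpow_of_exponent_le (by linarith) (by linarith)
      _ = ((X + √t) * (1 + Z)) ^ (-(b * q + γ)) := by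
          rw [mul_rpow (by positivity) (by positivity)]
      _ ≤ _ := rpow_le_rpow_of_nonpos (by positivity) hbase
          (neg_nonpos.2 (by positivity))
  have hquad : q * Y ^ 2 ≤ √q * X ^ 2 + q / (1 - √q) * T * Z ^ 2 := by
    have hw : 0 ≤ √(t - σ) * Z := by positivity
    have h1 : Y ^ 2 ≤ (X + √(t - σ) * Z) ^ 2 := pow_le_pow_left₀ hY.le hYX 2
    have h2 : (√(t - σ) * Z) ^ 2 ≤ T * Z ^ 2 := by
      rw [mul_pow, sq_sqrt (by linarith)]
      exact mul_le_mul_of_nonneg_right (by linarith) (by positivity)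
    have hd : 0 < 1 - √q := by linarith
    have hqq : √q ^ 2 = q := sq_sqrt hq0.le
    set w := √(t - σ) * Z
    have h3 : q * (X + w) ^ 2 ≤ √q * X ^ 2 + q / (1 - √q) * w ^ 2 := by
      have : √q * X ^ 2 + q / (1 - √q) * w ^ 2 - q * (X + w) ^ 2 =
          √q * (1 - √q) * (X - √q * w / (1 - √q)) ^ 2 := by
        rw [← hqq]
        simp only [sqrt_sq hr0.le]
        field_simp
        ring
      have h4 : 0 ≤ √q * (1 - √q) * (X - √q * w / (1 - √q)) ^ 2 := by positivity
      linarith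
    have h5 : q / (1 - √q) * w ^ 2 ≤ q / (1 - √q) * (T * Z ^ 2) :=
      mul_le_mul_of_nonneg_left h2 (by positivity)
    nlinarith
  have hexp : exp (-(√q * lam * X ^ 2)) * exp (-(lam * (q / (1 - √q) * T) * Z ^ 2)) ≤
      exp (-(lam * q * Y ^ 2)) := by
    rw [← exp_add, exp_le_exp]
    nlinarith [mul_le_mul_of_nonneg_left hquad hlam]
  calc A ^ q * D ^ (a * q) * (X + √t) ^ (-(b * q + γ)) * exp (-(√q * lam * X ^ 2)) *
        ((1 + Z) ^ (-α) * exp (-(lam * (q / (1 - √q) * T) * Z ^ 2)))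
      = A ^ q * D ^ (a * q) * ((X + √t) ^ (-(b * q + γ)) * (1 + Z) ^ (-α)) *
        (exp (-(√q * lam * X ^ 2)) * exp (-(lam * (q / (1 - √q) * T) * Z ^ 2))) := by ring
    _ ≤ A ^ q * D ^ (a * q) * (Y + √σ) ^ (-(b * q + γ)) * exp (-(lam * q * Y ^ 2)) := by gcongr
    _ = (Y + √σ) ^ (-γ) *
        (A ^ q * D ^ (a * q) * (Y + √σ) ^ (-(b * q)) * exp (-(lam * q * Y ^ 2))) := by
          rw [neg_add, rpow_add (by positivity)]
          ring
    _ ≤ Y ^ (-γ) * U ^ q := by gcongr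

theorem source_integral_lower_bound (N : ℕ) (hN : 1 ≤ N) {q γ α a b A τ lam T t σ : ℝ}
    (hq0 : 0 < q) (hq1 : q < 1) (hγ : 0 < γ) (hb : 0 ≤ b) (hbα : b * q + γ ≤ α) (hA : 0 < A)
    (hlam : 0 ≤ lam) (hτ : 0 ≤ τ) (hτσ : τ < σ) (hσt : σ < t) (htT : t ≤ T)
    {v : EuclideanSpace ℝ (Fin N) → ℝ} (x : EuclideanSpace ℝ (Fin N))
    (hInt : Integrable fun y => heatKernel N (t - σ) (x - y) * ‖y‖ ^ (-γ) * v y ^ q)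
    (hv : ∀ y, A * (σ - τ) ^ a * (‖y‖ + √σ) ^ (-b) * exp (-(lam * ‖y‖ ^ 2)) ≤ v y) :
    A ^ q * (σ - τ) ^ (a * q) * (‖x‖ + √t) ^ (-(b * q + γ)) * exp (-(√q * lam * ‖x‖ ^ 2)) *
      gaussianAverage N α (lam * (q / (1 - √q) * T)) ≤
      ∫ y, heatKernel N (t - σ) (x - y) * ‖y‖ ^ (-γ) * v y ^ q := by
  have hs : 0 < t - σ := sub_pos.2 hσt
  have hD : 0 < σ - τ := sub_pos.2 hτσ
  have hsq : 0 < √(t - σ) := sqrt_pos.2 hs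
  have hNe : Nonempty (Fin N) := ⟨⟨0, hN⟩⟩
  rw [gaussianAverage, ← integral_heatKernel_mul N hs x
    (fun z => (1 + ‖z‖) ^ (-α) * exp (-(lam * (q / (1 - √q) * T) * ‖z‖ ^ 2))),
    ← integral_const_mul]
  refine integral_mono_of_nonneg (Eventually.of_forall fun y => ?_) hInt ?_
  · have := heatKernel_nonneg N hs.le (x - y)
    simp only [Pi.zero_apply]
    positivity
  · have hne : ∀ᵐ y : EuclideanSpace ℝ (Fin N), y ≠ 0 := by
      simp [ae_iff]
    filter_upwards [hne] with y hy
    have hG := heatKernel_nonneg N hs.le (x - y)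
    have hyx : ‖y‖ ≤ ‖x‖ + √(t - σ) * ‖(√(t - σ))⁻¹ • (x - y)‖ := by
      rw [norm_smul, norm_of_nonneg (by positivity), mul_inv_cancel_left₀ hsq.ne']
      have := norm_sub_norm_le y x
      rw [norm_sub_rev] at this
      linarith
    have h := mul_le_mul_of_nonneg_left (source_pointwise_lower_bound (α := α) hq0 hq1 hγ hb hbα
      hA hD hlam (hτ.trans_lt hτσ) hσt htT (norm_nonneg x) (norm_pos_iff.2 hy) (norm_nonneg _) hyx
      (hv y)) hG
    refine le_trans (le_of_eq ?_) (h.trans (le_of_eq ?_)) <;> ring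

theorem integral_sub_rpow {τ t r : ℝ} (hr : 0 ≤ r) :
    ∫ σ in τ..t, (σ - τ) ^ r = (t - τ) ^ (r + 1) / (r + 1) := by
  rw [intervalIntegral.integral_comp_sub_right (fun s : ℝ => s ^ r) τ, sub_self,
    integral_rpow (Or.inl (by linarith)), zero_rpow (by linarith), sub_zero]

section Bootstrap

variable {N : ℕ} {q γ τ T : ℝ} {u : EuclideanSpace ℝ (Fin N) → ℝ → ℝ}

/-- One application of the Duhamel formula improves a lower bound on `(τ, T]`. -/
theorem lower_bound_step (hN : 1 ≤ N) (hq0 : 0 < q) (hq1 : q < 1) (hγ : 0 < γ) (hτ : 0 ≤ τ)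
    (hInt : ∀ x t σ, 0 ≤ σ → σ < t →
      Integrable fun y => heatKernel N (t - σ) (x - y) * ‖y‖ ^ (-γ) * u y σ ^ q)
    (hF : ∀ x t, 0 < t → IntervalIntegrable (fun σ => ∫ y,
      heatKernel N (t - σ) (x - y) * ‖y‖ ^ (-γ) * u y σ ^ q) volume 0 t)
    (hle : ∀ x t, τ < t → ∫ σ in τ..t, ∫ y,
      heatKernel N (t - σ) (x - y) * ‖y‖ ^ (-γ) * u y σ ^ q ≤ u x t)
    {α a b A lam K : ℝ} (ha : 0 ≤ a) (hap : a ≤ 1 / (1 - q)) (hb : 0 ≤ b)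
    (hbα : b * q + γ ≤ α) (hA : 0 < A) (hlam : 0 ≤ lam)
    (hK : K ≤ (1 - q) * gaussianAverage N α (lam * (q / (1 - √q) * T)))
    (hu : ∀ x t, τ < t → t ≤ T →
      A * (t - τ) ^ a * (‖x‖ + √t) ^ (-b) * exp (-(lam * ‖x‖ ^ 2)) ≤ u x t) :
    ∀ x t, τ < t → t ≤ T →
      A ^ q * K * (t - τ) ^ (a * q + 1) * (‖x‖ + √t) ^ (-(b * q + γ)) *
        exp (-(√q * lam * ‖x‖ ^ 2)) ≤ u x t := by
  intro x t hτt htT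
  refine le_trans ?_ (hle x t hτt)
  have ht : 0 < t := hτ.trans_lt hτt
  have hd : 0 < t - τ := sub_pos.2 hτt
  set H := gaussianAverage N α (lam * (q / (1 - √q) * T)) with hH
  have hr1 : √q < 1 := by rw [sqrt_lt' one_pos]; simpa using hq1
  have hα : 0 ≤ α := le_trans (by positivity) hbα
  have hT : 0 ≤ T := ht.le.trans htT
  have hHpos : 0 < H := gaussianAverage_pos N hα (by
    have : 0 < 1 - √q := by linarith
    positivity)
  set W := A ^ q * (‖x‖ + √t) ^ (-(b * q + γ)) * exp (-(√q * lam * ‖x‖ ^ 2)) with hW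
  have hWpos : 0 ≤ W := by positivity
  calc A ^ q * K * (t - τ) ^ (a * q + 1) * (‖x‖ + √t) ^ (-(b * q + γ)) *
        exp (-(√q * lam * ‖x‖ ^ 2))
      = W * (t - τ) ^ (a * q + 1) * K := by rw [hW]; ring
    _ ≤ W * (t - τ) ^ (a * q + 1) * (H / (a * q + 1)) := by
        refine mul_le_mul_of_nonneg_left (hK.trans ?_) (by positivity)
        have h1q : 0 < 1 - q := by linarith
        rw [le_div_iff₀ (by positivity)]
        rw [le_div_iff₀ h1q] at hap
        have : (1 - q) * (a * q + 1) ≤ 1 := by nlinarith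
        nlinarith
    _ = ∫ σ in τ..t, W * H * (σ - τ) ^ (a * q) := by
        rw [intervalIntegral.integral_const_mul, integral_sub_rpow (by positivity)]
        ring
    _ ≤ _ := by
        refine intervalIntegral.integral_mono_on_of_le_Ioo hτt.le ?_ ?_ fun σ hσ => ?_
        · refine Continuous.intervalIntegrable ?_ _ _
          exact continuous_const.mul ((continuous_id.sub continuous_const).rpow_const
            fun _ => Or.inr (by positivity))
        · refine (hF x t ht).mono_set ?_
          rw [Set.uIcc_of_le hτt.le, Set.uIcc_of_le ht.le]
          exact Set.Icc_subset_Icc_left hτ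
        · refine le_trans (le_of_eq ?_) (source_integral_lower_bound N hN hq0 hq1 hγ hb hbα hA hlam
            hτ hσ.1 hσ.2 htT x (hInt x t σ (hτ.trans hσ.1.le) hσ.2)
            fun y => hu y σ hσ.1 (hσ.2.le.trans htT))
          rw [hW, hH]
          ring

/-- Iterating `lower_bound_step` from any positive bound, in the limit. -/
theorem lower_bound_of_iteration (hN : 1 ≤ N) (hq0 : 0 < q) (hq1 : q < 1) (hγ : 0 < γ)
    (hτ : 0 ≤ τ) (hT : 0 ≤ T)
    (hInt : ∀ x t σ, 0 ≤ σ → σ < t →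
      Integrable fun y => heatKernel N (t - σ) (x - y) * ‖y‖ ^ (-γ) * u y σ ^ q)
    (hF : ∀ x t, 0 < t → IntervalIntegrable (fun σ => ∫ y,
      heatKernel N (t - σ) (x - y) * ‖y‖ ^ (-γ) * u y σ ^ q) volume 0 t)
    (hle : ∀ x t, τ < t → ∫ σ in τ..t, ∫ y,
      heatKernel N (t - σ) (x - y) * ‖y‖ ^ (-γ) * u y σ ^ q ≤ u x t)
    {a b A lam : ℝ} (ha : 0 ≤ a) (hap : a ≤ 1 / (1 - q)) (hb : 0 ≤ b)
    (hbα : b ≤ γ / (1 - q)) (hA : 0 < A) (hlam : 0 ≤ lam)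
    (hu : ∀ x t, τ < t → t ≤ T →
      A * (t - τ) ^ a * (‖x‖ + √t) ^ (-b) * exp (-(lam * ‖x‖ ^ 2)) ≤ u x t) :
    ∀ x t, τ < t → t ≤ T →
      ((1 - q) * gaussianAverage N (γ / (1 - q)) (lam * (q / (1 - √q) * T))) ^ (1 / (1 - q)) *
        (t - τ) ^ (1 / (1 - q)) * (‖x‖ + √t) ^ (-(γ / (1 - q))) ≤ u x t := by
  have h1q : 0 < 1 - q := by linarith
  have hr0 : 0 < √q := sqrt_pos.2 hq0
  have hr1 : √q < 1 := by rw [sqrt_lt' one_pos]; simpa using hq1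
  have hr1' : 0 < 1 - √q := by linarith
  set α := γ / (1 - q) with hαdef
  set p := 1 / (1 - q) with hpdef
  have hα : 0 ≤ α := by positivity
  have hp : 0 < p := by positivity
  have hpq : p * q + 1 = p := by rw [hpdef]; field_simp; ring
  have hαq : α * q + γ = α := by rw [hαdef]; field_simp; ring
  set K := (1 - q) * gaussianAverage N α (lam * (q / (1 - √q) * T)) with hKdef
  have hK : 0 < K := mul_pos h1q (gaussianAverage_pos N hα (by positivity))
  have key : ∀ k : ℕ, ∀ x t, τ < t → t ≤ T →
      A ^ (q ^ k) * K ^ ((1 - q ^ k) * p) * (t - τ) ^ (q ^ k * a + (1 - q ^ k) * p) *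
        (‖x‖ + √t) ^ (-(q ^ k * b + (1 - q ^ k) * α)) *
        exp (-(√q ^ k * lam * ‖x‖ ^ 2)) ≤ u x t := by
    intro k
    induction k with
    | zero => simpa using hu
    | succ k ih =>
      have hs0 : 0 < q ^ k := by positivity
      have hs1 : q ^ k ≤ 1 := pow_le_one₀ hq0.le hq1.le
      have hs1' : 0 ≤ 1 - q ^ k := by linarith
      have hrk : √q ^ k ≤ 1 := pow_le_one₀ hr0.le hr1.le
      have hbk : q ^ k * b + (1 - q ^ k) * α ≤ α := by nlinarith
      have hstep := lower_bound_step (α := α) (K := K) (T := T) hN hq0 hq1 hγ hτ hInt hF hle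
        (a := q ^ k * a + (1 - q ^ k) * p) (b := q ^ k * b + (1 - q ^ k) * α)
        (A := A ^ (q ^ k) * K ^ ((1 - q ^ k) * p)) (lam := √q ^ k * lam)
        (by positivity) (by rw [← hpdef]; nlinarith) (by positivity)
        (by nlinarith) (by positivity) (by positivity)
        (mul_le_mul_of_nonneg_left (gaussianAverage_antitone N hα (by positivity)
          (mul_le_mul_of_nonneg_right (mul_le_of_le_one_left hlam hrk) (by positivity))) h1q.le)
        ih
      intro x t hτt htT
      refine le_trans (le_of_eq ?_) (hstep x t hτt htT)
      have hAK : (A ^ (q ^ k) * K ^ ((1 - q ^ k) * p)) ^ q * K =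
          A ^ (q ^ (k + 1)) * K ^ ((1 - q ^ (k + 1)) * p) := by
        rw [mul_rpow (by positivity) (by positivity), ← rpow_mul hA.le, ← rpow_mul hK.le,
          mul_assoc, ← rpow_add_one hK.ne', pow_succ]
        congr 2
        linear_combination hpq
      have ha' : (q ^ k * a + (1 - q ^ k) * p) * q + 1 =
          q ^ (k + 1) * a + (1 - q ^ (k + 1)) * p := by linear_combination hpq
      have hb' : (q ^ k * b + (1 - q ^ k) * α) * q + γ =
          q ^ (k + 1) * b + (1 - q ^ (k + 1)) * α := by linear_combination hαq
      have hlam' : √q * (√q ^ k * lam) = √q ^ (k + 1) * lam := by ring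
      rw [hAK, ha', hb', hlam']
  intro x t hτt htT
  have hd : 0 < t - τ := sub_pos.2 hτt
  have hn : 0 < ‖x‖ + √t := add_pos_of_nonneg_of_pos (norm_nonneg x)
    (sqrt_pos.2 (hτ.trans_lt hτt))
  have hcont : Continuous fun s : ℝ × ℝ =>
      A ^ s.1 * K ^ ((1 - s.1) * p) * (t - τ) ^ (s.1 * a + (1 - s.1) * p) *
        (‖x‖ + √t) ^ (-(s.1 * b + (1 - s.1) * α)) * exp (-(s.2 * lam * ‖x‖ ^ 2)) := by
    have hrpow : ∀ {c : ℝ} {f : ℝ × ℝ → ℝ}, 0 < c → Continuous f →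
        Continuous fun s => c ^ f s := fun hc hf =>
      continuous_const.rpow hf fun _ => Or.inl hc.ne'
    refine (((hrpow hA ?_).mul (hrpow hK ?_)).mul (hrpow hd ?_)).mul (hrpow hn ?_) |>.mul ?_ <;>
      fun_prop
  have hlim : Tendsto (fun k : ℕ => (q ^ k, √q ^ k)) atTop (nhds ((0 : ℝ), (0 : ℝ))) :=
    (tendsto_pow_atTop_nhds_zero_of_lt_one hq0.le hq1).prodMk_nhds
      (tendsto_pow_atTop_nhds_zero_of_lt_one hr0.le hr1)
  have := le_of_tendsto ((hcont.tendsto (0, 0)).comp hlim)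
    (Eventually.of_forall fun k => key k x t hτt htT)
  simpa using this

end Bootstrap

/-- Gaussian lower bound for the heat flow of a non-trivial non-negative function, uniformly on
`[τ, T]`. -/
theorem exists_heatFlow_lower_bound (N : ℕ) {u₀ : EuclideanSpace ℝ (Fin N) → ℝ}
    (hu₀c : Continuous u₀) (hu₀nn : ∀ x, 0 ≤ u₀ x) (hu₀ne : u₀ ≠ 0) {M : ℝ}
    (hM : ∀ x, u₀ x ≤ M) {τ T : ℝ} (hτ : 0 < τ) (hT : 0 < T) :
    ∃ A > 0, ∃ lam ≥ 0, ∀ x t, τ < t → t ≤ T →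
      A * exp (-(lam * ‖x‖ ^ 2)) ≤ ∫ y, heatKernel N t (x - y) * u₀ y := by
  obtain ⟨x₀, hx₀⟩ : ∃ x₀, u₀ x₀ ≠ 0 := Function.ne_iff.1 hu₀ne
  have hpos : 0 < u₀ x₀ := lt_of_le_of_ne (hu₀nn x₀) hx₀.symm
  obtain ⟨r, hr, hball⟩ := Metric.eventually_nhds_iff_ball.1
    (hu₀c.continuousAt.eventually (lt_mem_nhds (half_lt_self hpos)))
  set R := ‖x₀‖ + r with hR
  have hvol : 0 < volume.real (Metric.ball x₀ r) :=
    ENNReal.toReal_pos (Metric.measure_ball_pos volume x₀ hr).ne' measure_ball_lt_top.ne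
  refine ⟨volume.real (Metric.ball x₀ r) *
    ((4 * π * T) ^ (-(N : ℝ) / 2) * exp (-(R ^ 2 / (2 * τ))) * (u₀ x₀ / 2)), by positivity,
    1 / (2 * τ), by positivity, fun x t hτt htT => ?_⟩
  have ht : 0 < t := hτ.trans hτt
  set c := (4 * π * T) ^ (-(N : ℝ) / 2) * exp (-(R ^ 2 / (2 * τ))) * (u₀ x₀ / 2) *
    exp (-(1 / (2 * τ) * ‖x‖ ^ 2)) with hc
  have hInt : Integrable fun y => heatKernel N t (x - y) * u₀ y :=
    (integrable_heatKernel N ht x).mul_bdd (c := M) hu₀c.aestronglyMeasurable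
      (Eventually.of_forall fun y => by rw [norm_of_nonneg (hu₀nn y)]; exact hM y)
  have hnn : ∀ y, 0 ≤ heatKernel N t (x - y) * u₀ y := fun y =>
    mul_nonneg (heatKernel_nonneg N ht.le _) (hu₀nn y)
  calc _ = ∫ y, (Metric.ball x₀ r).indicator (fun _ => c) y := by
        rw [integral_indicator measurableSet_ball, setIntegral_const, smul_eq_mul, hc]
        ring
    _ ≤ _ := by
        refine integral_mono_of_nonneg (Eventually.of_forall fun y =>
          Set.indicator_nonneg (fun _ _ => by positivity) y) hInt
          (Eventually.of_forall fun y => ?_)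
        refine Set.indicator_le' (fun y hy => ?_) (fun y _ => hnn y) y
        have hu := (hball y hy).le
        have hy' : ‖x - y‖ ≤ ‖x‖ + R := by
          have h1 := norm_sub_le x y
          have h2 : ‖y - x₀‖ < r := mem_ball_iff_norm.1 hy
          have h3 := norm_sub_norm_le y x₀
          linarith
        have hsq : ‖x - y‖ ^ 2 ≤ 2 * ‖x‖ ^ 2 + 2 * R ^ 2 := by
          have := pow_le_pow_left₀ (norm_nonneg _) hy' 2
          nlinarith [sq_nonneg (‖x‖ - R)]
        have hG : (4 * π * T) ^ (-(N : ℝ) / 2) *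
            (exp (-(R ^ 2 / (2 * τ))) * exp (-(1 / (2 * τ) * ‖x‖ ^ 2))) ≤
            heatKernel N t (x - y) := by
          unfold heatKernel
          refine mul_le_mul ?_ ?_ (by positivity) (by positivity)
          · refine rpow_le_rpow_of_nonpos (by positivity) (by gcongr) ?_
            rw [neg_div]
            exact neg_nonpos.2 (by positivity)
          · rw [← exp_add, exp_le_exp]
            have h1 : ‖x - y‖ ^ 2 / (4 * t) ≤ (2 * ‖x‖ ^ 2 + 2 * R ^ 2) / (4 * τ) := by
              gcongr
            have h2 : (2 * ‖x‖ ^ 2 + 2 * R ^ 2) / (4 * τ) =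
                R ^ 2 / (2 * τ) + 1 / (2 * τ) * ‖x‖ ^ 2 := by
              field_simp
              ring
            rw [neg_div]
            linarith
        calc c = (4 * π * T) ^ (-(N : ℝ) / 2) *
              (exp (-(R ^ 2 / (2 * τ))) * exp (-(1 / (2 * τ) * ‖x‖ ^ 2))) * (u₀ x₀ / 2) := by
              rw [hc]; ring
          _ ≤ heatKernel N t (x - y) * u₀ y := by
              refine mul_le_mul hG hu (by positivity) (heatKernel_nonneg N ht.le _)

/-- Any non-negative solution of `u_t - Δu = |x|^{-γ} u^q` with non-trivial
non-negative initial data `u₀ ∈ C₀(ℝ^N)` satisfies the lower bound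
`u(x,t) ≥ [(1-q)η₀]^{1/(1-q)} t^{1/(1-q)} (|x|+√t)^{-γ/(1-q)}`; in particular
it is positive for `t > 0`. -/
theorem lower_bound_solution (N : ℕ) (hN : 1 ≤ N) (q γ : ℝ)
    (hq0 : 0 < q) (hq1 : q < 1) (hγ0 : 0 < γ) (hγ : γ < min 2 (N : ℝ))
    (u₀ : EuclideanSpace ℝ (Fin N) → ℝ)
    (hu₀c : Continuous u₀)
    (hu₀v : Tendsto u₀ (cocompact (EuclideanSpace ℝ (Fin N))) (nhds 0))
    (hu₀nn : ∀ x, 0 ≤ u₀ x) (hu₀ne : u₀ ≠ 0)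
    (η₀ : ℝ)
    (hη₀ : η₀ = (4 * π) ^ (-(N : ℝ) / 2) *
      ∫ z : EuclideanSpace ℝ (Fin N),
        Real.exp (-‖z‖ ^ 2 / 4) * (1 + ‖z‖) ^ (-γ / (1 - q)))
    (u : EuclideanSpace ℝ (Fin N) → ℝ → ℝ)
    -- u is non-negative
    (hunn : ∀ x t, 0 ≤ t → 0 ≤ u x t)
    -- for every t ≥ 0, x ↦ u(x,t) is continuous and vanishes at infinity
    (huc : ∀ t, 0 ≤ t → Continuous (fun x => u x t))
    (huv : ∀ t, 0 ≤ t → Tendsto (fun x => u x t)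
      (cocompact (EuclideanSpace ℝ (Fin N))) (nhds 0))
    -- t ↦ u(·,t) is continuous from [0,∞) into (C₀, sup norm)
    (husup : ∀ t₀, 0 ≤ t₀ → ∀ ε > (0 : ℝ), ∃ δ > (0 : ℝ), ∀ t, 0 ≤ t →
      |t - t₀| < δ → ∀ x, |u x t - u x t₀| ≤ ε)
    -- initial condition (the integral equation at t = 0)
    (huinit : ∀ x, u x 0 = u₀ x)
    -- the integral equation for t > 0
    (hueq : ∀ t, 0 < t → ∀ x,
      u x t = (∫ y, heatKernel N t (x - y) * u₀ y) +
        ∫ σ in (0 : ℝ)..t, ∫ y,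
          heatKernel N (t - σ) (x - y) * ‖y‖ ^ (-γ) * u y σ ^ q) :
    (∀ x t, 0 ≤ t →
      ((1 - q) * η₀) ^ (1 / (1 - q)) * t ^ (1 / (1 - q)) *
        (‖x‖ + Real.sqrt t) ^ (-γ / (1 - q)) ≤ u x t) ∧
    (∀ x t, 0 < t → 0 < u x t) := by
  have hγ2 : γ < 2 := hγ.trans_le (min_le_left _ _)
  have hγN : γ < N := hγ.trans_le (min_le_right _ _)
  have h1q : 0 < 1 - q := by linarith
  have hα : 0 ≤ γ / (1 - q) := by positivity
  have hcont := continuous_uncurry_of_continuous_sup N u huc husup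
  have hbound := exists_bound_of_continuous_sup N u huc huv husup
  have hInt : ∀ x t σ, 0 ≤ σ → σ < t →
      Integrable fun y => heatKernel N (t - σ) (x - y) * ‖y‖ ^ (-γ) * u y σ ^ q := by
    intro x t σ hσ hσt
    obtain ⟨M, hM⟩ := hbound σ
    exact integrable_heatKernel_mul_norm_rpow_mul N hN (K := M ^ q) hγ0 hγN (sub_pos.2 hσt) x
      ((huc σ hσ).measurable.pow_const q) (fun y => rpow_nonneg (hunn y σ hσ) q)
      fun y => rpow_le_rpow (hunn y σ hσ) (hM σ ⟨hσ, le_rfl⟩ y) hq0.le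
  have hF : ∀ x t, 0 < t → IntervalIntegrable (fun σ => ∫ y,
      heatKernel N (t - σ) (x - y) * ‖y‖ ^ (-γ) * u y σ ^ q) volume 0 t := by
    intro x t ht
    obtain ⟨M, hM⟩ := hbound t
    have h := intervalIntegrable_duhamel N hN (K := M ^ q) hγ0 hγN hγ2 ht.le x
      (f := fun σ y => u y (max σ 0) ^ q) (hcont.measurable.pow_const q)
      (fun s y => rpow_nonneg (hunn y _ (le_max_right _ _)) q) fun s hs y => by
        rw [max_eq_left hs.1.le]
        exact rpow_le_rpow (hunn y s hs.1.le) (hM s ⟨hs.1.le, hs.2.le⟩ y) hq0.le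
    refine h.congr fun σ hσ => ?_
    rw [Set.uIoc_of_le ht.le] at hσ
    simp only [max_eq_left hσ.1.le]
  have hFnn : ∀ x t σ, 0 ≤ σ → σ ≤ t → 0 ≤ ∫ y,
      heatKernel N (t - σ) (x - y) * ‖y‖ ^ (-γ) * u y σ ^ q := by
    intro x t σ hσ hσt
    refine integral_nonneg fun y => ?_
    have := heatKernel_nonneg N (sub_nonneg.2 hσt) (x - y)
    have := hunn y σ hσ
    simp only [Pi.zero_apply]
    positivity
  have hheat : ∀ x t, 0 < t → 0 ≤ ∫ y, heatKernel N t (x - y) * u₀ y := fun x t ht =>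
    integral_nonneg fun y => mul_nonneg (heatKernel_nonneg N ht.le _) (hu₀nn y)
  have hle : ∀ τ, 0 ≤ τ → ∀ x t, τ < t → ∫ σ in τ..t, ∫ y,
      heatKernel N (t - σ) (x - y) * ‖y‖ ^ (-γ) * u y σ ^ q ≤ u x t := by
    intro τ hτ x t hτt
    have ht : 0 < t := hτ.trans_lt hτt
    have hmono := intervalIntegral.integral_mono_interval hτ hτt.le le_rfl
      ((ae_restrict_iff' measurableSet_Ioc).2 (Eventually.of_forall fun σ hσ =>
        hFnn x t σ hσ.1.le hσ.2)) (hF x t ht)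
    rw [hueq t ht x]
    linarith [hheat x t ht]
  have hu_heat : ∀ x t, 0 < t → ∫ y, heatKernel N t (x - y) * u₀ y ≤ u x t := by
    intro x t ht
    rw [hueq t ht x]
    exact le_add_of_nonneg_right (intervalIntegral.integral_nonneg ht.le fun σ hσ =>
      hFnn x t σ hσ.1 hσ.2)
  have hη : η₀ = gaussianAverage N (γ / (1 - q)) 0 := by
    simp [hη₀, gaussianAverage, neg_div]
  have hη₀pos : 0 < η₀ := hη ▸ gaussianAverage_pos N hα le_rfl
  have hshift : ∀ x t τ, 0 < τ → τ < t →
      ((1 - q) * η₀) ^ (1 / (1 - q)) * (t - τ) ^ (1 / (1 - q)) *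
        (‖x‖ + √t) ^ (-(γ / (1 - q))) ≤ u x t := by
    intro x t τ hτ hτt
    have ht : 0 < t := hτ.trans hτt
    have hr1 : √q < 1 := by rw [sqrt_lt' one_pos]; simpa using hq1
    have hr1' : 0 < 1 - √q := by linarith
    obtain ⟨M, hM⟩ := hbound 0
    obtain ⟨A, hA, lam, hlam, hAu⟩ := exists_heatFlow_lower_bound N hu₀c hu₀nn hu₀ne
      (fun x => by simpa [huinit] using hM 0 ⟨le_rfl, le_rfl⟩ x) hτ ht
    have hfirst := lower_bound_of_iteration (a := 0) (b := 0) hN hq0 hq1 hγ0 hτ.le ht.le hInt hF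
      (hle τ hτ.le) le_rfl (by positivity) le_rfl hα hA hlam fun x s hτs hst => by
        simpa using (hAu x s hτs hst).trans (hu_heat x s (hτ.trans hτs))
    have hsecond := lower_bound_of_iteration (lam := 0) (A := ((1 - q) *
      gaussianAverage N (γ / (1 - q)) (lam * (q / (1 - √q) * t))) ^ (1 / (1 - q)))
      hN hq0 hq1 hγ0 hτ.le ht.le hInt hF (hle τ hτ.le) (by positivity) le_rfl hα le_rfl
      (rpow_pos_of_pos (mul_pos h1q (gaussianAverage_pos N hα (by positivity))) _) le_rfl
      fun x s hτs hst => by simpa using hfirst x s hτs hst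
    rw [hη]
    simpa using hsecond x t hτt le_rfl
  have hmain : ∀ x t, 0 ≤ t → ((1 - q) * η₀) ^ (1 / (1 - q)) * t ^ (1 / (1 - q)) *
      (‖x‖ + √t) ^ (-γ / (1 - q)) ≤ u x t := by
    intro x t ht
    rcases ht.eq_or_lt with rfl | ht
    · rw [zero_rpow (by positivity)]
      simpa using hunn x 0 le_rfl
    · rw [neg_div]
      have hc : Continuous fun τ : ℝ => ((1 - q) * η₀) ^ (1 / (1 - q)) *
          (t - τ) ^ (1 / (1 - q)) * (‖x‖ + √t) ^ (-(γ / (1 - q))) :=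
        (continuous_const.mul ((continuous_const.sub continuous_id).rpow_const
          fun _ => Or.inr (by positivity))).mul continuous_const
      have hlim := (hc.tendsto 0).mono_left (nhdsWithin_le_nhds (s := Set.Ioi 0))
      rw [sub_zero] at hlim
      refine le_of_tendsto hlim ?_
      filter_upwards [Ioo_mem_nhdsGT ht] with τ hτ
      exact hshift x t τ hτ.1 hτ.2
  refine ⟨hmain, fun x t ht => lt_of_lt_of_le ?_ (hmain x t ht.le)⟩
  have := sqrt_pos.2 ht
  positivity
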